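/- lim sup_{n→∞} W_3(n)^{1/n} ≤ 12.53296…, i.e., the exponential growth rate of 3-stack sortable permutations is at most 12.533. -/

import Mathlib

open Filter

def push (x : ℕ) : List ℕ → List ℕ → List ℕ × List ℕ
  | [], out => ([x], out)
  | t :: s, out => if t < x then push x s (out ++ [t]) else (x :: t :: s, out)

def sortAux : List ℕ → List ℕ → List ℕ → List ℕ
  | [], stack, out => out ++ stack
  | x :: xs, stack, out =>
      let r := push x stack out
      sortAux xs r.1 r.2

/-- The stack sorting map `s`: `s(∅) = ∅` and `s(L n R) = s(L) s(R) n` with `n` maximal. -/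
def stackSort (p : List ℕ) : List ℕ := sortAux p [] []

/-- The number of 3-stack sortable permutations of length `n`. -/
noncomputable def W₃ (n : ℕ) : ℕ :=
  {p : List ℕ | p.Perm (List.range' 1 n) ∧
    stackSort^[3] p = List.range' 1 n}.ncard

/-!
A permutation `p` is determined by `stackSort p`, its ascent tops and its descent tops, and these
tops are ascent tops of `stackSort p`. Hence a permutation `σ` of length `n` with `a` ascents has at
most `(2 * a).choose (n - 1) ≤ (1 + t) ^ (2 * a) / t ^ (n - 1)` preimages, for every `t > 0`. It
remains to bound the sum of `x ^ n * (1 + t) ^ (2 * a)` over the permutations `σ` that are sorted by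
two passes; then `stackSort σ` avoids `231`. Splitting `σ` at its maximum encodes it by a binary
tree whose labels range over the positions where the sorted right factor can be cut into small
letters followed by large ones. The number of cuts is a catalytic parameter, and the resulting
equation has an explicit solution in terms of weighted Motzkin numbers when the node weights are
parametrized as `x = u * (1 - v) ^ 2` and `x * (1 + t) ^ 2 = v * (1 - u) ^ 2`. This solution is
nonnegative and summable as long as `4 * (u * v) ≤ (1 - u) * (1 - v)`.
-/

section Motzkin

open PowerSeries
open Finset.HasAntidiagonal (antidiagonal)

/-- Weighted Motzkin numbers: the total weight of the Motzkin paths with `n` steps, where a level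
step has weight `σ` and a pair of matching up and down steps has weight `p`. -/
def motzkin {R : Type*} [CommSemiring R] (σ p : R) : ℕ → R
  | 0 => 1
  | n + 1 => σ * motzkin σ p n + p * ∑ i : Fin n, motzkin σ p i * motzkin σ p (n - 1 - i)

@[simp]
theorem motzkin_zero {R : Type*} [CommSemiring R] (σ p : R) : motzkin σ p 0 = 1 := by
  rw [motzkin]

@[simp]
theorem motzkin_one {R : Type*} [CommSemiring R] (σ p : R) : motzkin σ p 1 = σ := by
  simp [motzkin]

theorem motzkin_add_two {R : Type*} [CommSemiring R] (σ p : R) (n : ℕ) :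
    motzkin σ p (n + 2) = σ * motzkin σ p (n + 1) +
      p * ∑ ij ∈ antidiagonal n, motzkin σ p ij.1 * motzkin σ p ij.2 := by
  rw [motzkin, Nat.add_sub_cancel, Fin.sum_univ_eq_sum_range
    fun i => motzkin σ p i * motzkin σ p (n - i), Finset.Nat.sum_antidiagonal_eq_sum_range_succ_mk]

theorem motzkin_nonneg {σ p : ℝ} (hσ : 0 ≤ σ) (hp : 0 ≤ p) (n : ℕ) : 0 ≤ motzkin σ p n := by
  induction n using Nat.strong_induction_on with
  | _ n ih =>
    obtain _ | n := n
    · simp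
    · rw [motzkin]
      exact add_nonneg (mul_nonneg hσ (ih _ n.lt_succ_self)) <| mul_nonneg hp <|
        Finset.sum_nonneg fun i _ => mul_nonneg (ih _ (by omega)) (ih _ (by omega))

theorem mk_motzkin_eq {R : Type*} [CommSemiring R] (σ p : R) :
    mk (motzkin σ p) = 1 + C σ * (X * mk (motzkin σ p)) +
      C p * (X * (X * (mk (motzkin σ p) * mk (motzkin σ p)))) := by
  ext n
  simp only [map_add, coeff_C_mul]
  obtain _ | _ | n := n
  · simp
  · simp [coeff_succ_X_mul, coeff_one]
  · simp only [coeff_succ_X_mul]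
    simp [coeff_mul, coeff_one, motzkin_add_two]

theorem mk_motzkin_differential_eq {R : Type*} [CommRing R] (σ p : R) :
    X * (1 - C (2 * σ) * X + C (σ ^ 2 - 4 * p) * (X * X)) * d⁄dX R (mk (motzkin σ p)) =
      2 - (2 - C (3 * σ) * X + C (σ ^ 2 - 4 * p) * (X * X)) * mk (motzkin σ p) := by
  have functional := mk_motzkin_eq σ p
  have differentiated := congrArg (d⁄dX R) functional
  set M := mk (motzkin σ p)
  simp only [map_add, Derivation.leibniz, derivative_C, derivative_X, smul_eq_mul,
    Derivation.map_one_eq_zero, map_sub, map_mul, map_pow, map_ofNat] at differentiated ⊢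
  linear_combination (X * (1 - C σ * X - 2 * C p * X ^ 2 * M)) * differentiated +
    (4 * C p * X ^ 2 * M + 2 + 4 * C p * X ^ 3 * d⁄dX R M) * functional

theorem motzkin_recurrence {R : Type*} [CommRing R] (σ p : R) (n : ℕ) :
    (n + 4) * motzkin σ p (n + 2) =
      (2 * n + 5) * σ * motzkin σ p (n + 1) - (n + 1) * (σ ^ 2 - 4 * p) * motzkin σ p n := by
  have h := mk_motzkin_differential_eq σ p
  set M := mk (motzkin σ p) with hM
  have expanded : X * d⁄dX R M - C (2 * σ) * (X * (X * d⁄dX R M)) +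
      C (σ ^ 2 - 4 * p) * (X * (X * (X * d⁄dX R M))) =
      C 2 - (C 2 * M - C (3 * σ) * (X * M) + C (σ ^ 2 - 4 * p) * (X * (X * M))) := by
    rw [map_ofNat]
    linear_combination h
  generalize σ ^ 2 - 4 * p = δ at expanded ⊢
  have coeff_eq := congrArg (coeff (n + 2)) expanded
  simp only [map_add, map_sub, coeff_C_mul, coeff_succ_X_mul, coeff_derivative, hM, coeff_mk,
    coeff_C, Nat.add_eq_zero_iff, OfNat.ofNat_ne_zero, and_false, if_false] at coeff_eq
  obtain _ | n := n
  · simp only [coeff_zero_X_mul] at coeff_eq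
    push_cast at coeff_eq ⊢
    linear_combination coeff_eq
  · simp only [coeff_succ_X_mul, coeff_derivative, coeff_mk] at coeff_eq
    push_cast at coeff_eq ⊢
    linear_combination coeff_eq

theorem motzkin_succ_le {σ p r : ℝ} (hσ : 0 ≤ σ) (hp : 0 ≤ p) (hr : 0 < r) (hσr : σ ≤ r)
    (hdisc : 4 * p ≤ σ ^ 2) (hpr : 4 * p ≤ (r - σ) ^ 2) (n : ℕ) :
    motzkin σ p (n + 1) ≤ r * motzkin σ p n := by
  induction n with
  | zero => simpa using hσr
  | succ n ih =>
    have h1 := motzkin_nonneg hσ hp (n + 1)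
    have recurrence := motzkin_recurrence σ p n
    have gap : 0 ≤ (n + 1) * ((r - σ) ^ 2 - 4 * p) + 3 * r * (r - σ) := by
      have := sub_nonneg.2 hpr
      have := sub_nonneg.2 hσr
      positivity
    have hn : (0 : ℝ) < n + 4 := by positivity
    refine le_of_mul_le_mul_left ?_ (mul_pos hn hr)
    have step : (n + 1) * (σ ^ 2 - 4 * p) * motzkin σ p (n + 1) ≤
        (n + 1) * (σ ^ 2 - 4 * p) * (r * motzkin σ p n) :=
      mul_le_mul_of_nonneg_left ih (mul_nonneg (by positivity) (sub_nonneg.2 hdisc))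
    linear_combination step + r * recurrence + mul_nonneg gap h1

theorem tsum_motzkin_eq {σ p : ℝ} (hs : Summable (motzkin σ p)) :
    ∑' n, motzkin σ p n =
      1 + σ * ∑' n, motzkin σ p n + p * (∑' n, motzkin σ p n) ^ 2 := by
  have hnorm : Summable fun n => ‖motzkin σ p n‖ := hs.norm
  have hs1 := (summable_nat_add_iff 1).2 hs
  have hconv := summable_sum_mul_antidiagonal_of_summable_norm' hnorm hs hnorm hs
  have split0 : ∑' n, motzkin σ p n = 1 + ∑' n, motzkin σ p (n + 1) := by
    simpa using hs.tsum_eq_zero_add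
  have split1 : ∑' n, motzkin σ p (n + 1) = σ + ∑' n, motzkin σ p (n + 2) := by
    simpa using hs1.tsum_eq_zero_add
  simp_rw [motzkin_add_two, (hs1.mul_left σ).tsum_add (hconv.mul_left p), tsum_mul_left,
    ← tsum_mul_tsum_eq_tsum_sum_antidiagonal_of_summable_norm hnorm hnorm] at split1
  linear_combination (1 - σ) * split0 + split1

end Motzkin

/-- `g c` can serve as an upper bound for the total weight of the `SplitTree`s of rank `c`, and `S`
for the total weight of all of them, when a leaf has weight `1`, a node without left child has
weight `x` and a node with left child has weight `y`. -/
structure IsMajorant (x y S : ℝ) (g : ℕ → ℝ) : Prop where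
  nonneg : ∀ c, 0 ≤ g c
  one_le_zero : 1 ≤ g 0
  sum_range_le : ∀ b, ∑ k ∈ Finset.range b, g k ≤ S
  step_le : ∀ c, x * g c + y * ∑ ij ∈ Finset.HasAntidiagonal.antidiagonal c,
    (if ij.1 = 0 then 0 else g ij.1) * (S - ∑ k ∈ Finset.range ij.2, g k) ≤ g (c + 1)

section Catalytic

open PowerSeries
open Finset.HasAntidiagonal (antidiagonal)

/-- The Motzkin numbers that solve the catalytic equation with weights `x = u * (1 - v) ^ 2` and
`y = v * (1 - u) ^ 2`. -/
noncomputable def catalyticMotzkin (u v : ℝ) : ℕ → ℝ :=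
  motzkin (u * (1 - v) + v * (1 - u)) (u * (1 - v) * (v * (1 - u)))

/-- The solution of the catalytic equation with weights `x = u * (1 - v) ^ 2` and
`y = v * (1 - u) ^ 2`: equality holds in `IsMajorant.step_le`. -/
noncomputable def levelWeight (u v : ℝ) : ℕ → ℝ
  | 0 => 1
  | c + 1 => u * (1 - v) / (1 - u) *
      ((1 - u * v) * catalyticMotzkin u v c - catalyticMotzkin u v (c + 1))

/-- The sum of `levelWeight u v`. -/
noncomputable def totalWeight (u v : ℝ) : ℝ := 1 + u * (1 - u - v) / (1 - u) ^ 2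

variable {u v : ℝ}

theorem catalyticMotzkin_zero : catalyticMotzkin u v 0 = 1 := motzkin_zero _ _

variable (u v) in
/-- `1 - (1 - (1 - u * v) * X) * M`, where `M` is the generating function of
`catalyticMotzkin u v`; it is proportional to the generating function of `levelWeight u v`
without its constant term. -/
noncomputable def catalyticSeries : ℝ⟦X⟧ :=
  1 - (1 - (1 - C u * C v) * X) * mk (catalyticMotzkin u v)

theorem catalyticSeries_quadratic :
    C u * (1 - C v) * (C v * (1 - C u)) * X ^ 2 * catalyticSeries u v ^ 2 +
      catalyticSeries u v * ((1 - X) * (1 - C u * (1 - C v) ^ 2 * X) -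
        X * (C v * (1 - C u) ^ 2 * (1 - X) + C u * C v * (1 - C u - C v))) =
      (1 - C u) * (1 - C v) * X * (1 - X) := by
  have h := mk_motzkin_eq (u * (1 - v) + v * (1 - u)) (u * (1 - v) * (v * (1 - u)))
  change mk (catalyticMotzkin u v) = 1 + _ * (X * mk (catalyticMotzkin u v)) +
    _ * (X * (X * (mk (catalyticMotzkin u v) * mk (catalyticMotzkin u v)))) at h
  simp only [map_add, map_mul, map_sub, map_one] at h
  rw [catalyticSeries]
  linear_combination (-(1 - (1 - C u * C v) * X) ^ 2) * h

theorem mk_levelWeight :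
    mk (levelWeight u v) = 1 + C (u * (1 - v) / (1 - u)) * catalyticSeries u v := by
  have expanded : catalyticSeries u v = 1 - mk (catalyticMotzkin u v) +
      C (1 - u * v) * (X * mk (catalyticMotzkin u v)) := by
    simp only [catalyticSeries, map_mul, map_sub, map_one]
    ring
  ext (_ | c)
  · simp [expanded, levelWeight, catalyticMotzkin_zero]
  · rw [expanded, map_add, coeff_C_mul, map_add, coeff_C_mul, coeff_succ_X_mul]
    simp only [coeff_mk, levelWeight, map_sub, coeff_one, c.succ_ne_zero, if_false]
    ring

theorem one_sub_X_mul_mk_sub_sum_range {R : Type*} [CommRing R] (g : ℕ → R) (S : R) :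
    (1 - X) * mk (fun b => S - ∑ k ∈ Finset.range b, g k) = C S - X * mk g := by
  ext (_ | b)
  · simp [sub_mul]
  · simp [sub_mul, coeff_succ_X_mul, Finset.sum_range_succ]

theorem mk_levelWeight_functional_eq (hu : u ≠ 1) :
    mk (levelWeight u v) = 1 + X * (C (u * (1 - v) ^ 2) * mk (levelWeight u v) +
      C (v * (1 - u) ^ 2) * ((mk (levelWeight u v) - 1) *
        mk fun b => totalWeight u v - ∑ k ∈ Finset.range b, levelWeight u v k)) := by
  have tail_eq := one_sub_X_mul_mk_sub_sum_range (levelWeight u v) (totalWeight u v)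
  have quadratic := catalyticSeries_quadratic (u := u) (v := v)
  rw [mk_levelWeight] at tail_eq ⊢
  set κ := u * (1 - v) / (1 - u) with hκ
  have hu' : 1 - u ≠ 0 := sub_ne_zero.2 hu.symm
  have x_eq := congrArg (C (R := ℝ)) (show u * (1 - v) ^ 2 = κ * ((1 - u) * (1 - v)) by
    rw [hκ]; field_simp)
  have y_eq := congrArg (C (R := ℝ)) (show v * (1 - u) ^ 2 * κ = u * (1 - v) * (v * (1 - u)) by
    rw [hκ]; field_simp)
  have total_eq := congrArg (C (R := ℝ)) (show
      v * (1 - u) ^ 2 * (totalWeight u v - 1) = u * v * (1 - u - v) by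
    rw [totalWeight]; field_simp; ring)
  have hX : (1 - X : ℝ⟦X⟧) ≠ 0 := fun h => by simpa using congrArg constantCoeff h
  apply mul_left_cancel₀ hX
  simp only [map_mul, map_sub, map_pow, map_one] at x_eq y_eq total_eq ⊢
  linear_combination C κ * quadratic + (C κ * X ^ 2 * catalyticSeries u v ^ 2) * y_eq -
    (X * (1 - X)) * x_eq - (C κ * catalyticSeries u v * X) * total_eq -
    (X * C v * (1 - C u) ^ 2 * C κ * catalyticSeries u v) * tail_eq

theorem levelWeight_succ (hu : u ≠ 1) (c : ℕ) :
    levelWeight u v (c + 1) = u * (1 - v) ^ 2 * levelWeight u v c +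
      v * (1 - u) ^ 2 * ∑ ij ∈ antidiagonal c, (if ij.1 = 0 then 0 else levelWeight u v ij.1) *
        (totalWeight u v - ∑ k ∈ Finset.range ij.2, levelWeight u v k) := by
  have h := congrArg (coeff (c + 1)) (mk_levelWeight_functional_eq (v := v) hu)
  have coeff_sub_one (i : ℕ) : coeff i (mk (levelWeight u v) - 1) =
      if i = 0 then 0 else levelWeight u v i := by
    obtain _ | i := i <;> simp [levelWeight, coeff_one]
  rw [map_add, coeff_succ_X_mul, map_add, coeff_C_mul, coeff_C_mul, coeff_mul, coeff_one] at h
  simpa only [coeff_mk, coeff_sub_one, Nat.add_eq_zero_iff, one_ne_zero, and_false, if_false,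
    zero_add] using h

section Majorant

variable (hu0 : 0 < u) (hu1 : u < 1) (hv0 : 0 < v) (hv1 : v < 1)
  (huv : 4 * (u * v) ≤ (1 - u) * (1 - v))

include hu0 hu1 hv0 hv1

theorem catalyticMotzkin_nonneg (n : ℕ) : 0 ≤ catalyticMotzkin u v n := by
  have := sub_pos.2 hu1
  have := sub_pos.2 hv1
  exact motzkin_nonneg (by positivity) (by positivity) n

include huv

theorem catalyticMotzkin_succ_le (n : ℕ) :
    catalyticMotzkin u v (n + 1) ≤ (1 - u * v) * catalyticMotzkin u v n := by
  have hu := sub_pos.2 hu1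
  have hv := sub_pos.2 hv1
  have hA := mul_pos hu hv
  refine motzkin_succ_le (by positivity) (by positivity) ?_ ?_ ?_ ?_ n
  · linear_combination mul_lt_one_of_nonneg_of_lt_one_left hu0.le hu1 hv1.le
  · linear_combination hA.le
  · linear_combination sq_nonneg (u - v)
  · linear_combination mul_le_mul_of_nonneg_left huv hA.le

theorem summable_catalyticMotzkin : Summable (catalyticMotzkin u v) := by
  have nonneg := catalyticMotzkin_nonneg hu0 hu1 hv0 hv1
  refine summable_of_ratio_norm_eventually_le (r := 1 - u * v)
    (sub_lt_self _ (mul_pos hu0 hv0)) (Eventually.of_forall fun n => ?_)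
  rw [Real.norm_of_nonneg (nonneg _), Real.norm_of_nonneg (nonneg _)]
  exact catalyticMotzkin_succ_le hu0 hu1 hv0 hv1 huv n

theorem inv_le_tsum_catalyticMotzkin :
    ((1 - u) * (1 - v))⁻¹ ≤ ∑' n, catalyticMotzkin u v n := by
  have hA : 0 < (1 - u) * (1 - v) := mul_pos (sub_pos.2 hu1) (sub_pos.2 hv1)
  have hB := mul_pos hu0 hv0
  set L := ∑' n, catalyticMotzkin u v n
  have h : L = 1 + (u * (1 - v) + v * (1 - u)) * L + u * (1 - v) * (v * (1 - u)) * L ^ 2 :=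
    tsum_motzkin_eq (summable_catalyticMotzkin hu0 hu1 hv0 hv1 huv)
  have factored : ((1 - u) * (1 - v) * L - 1) * (u * v * L - 1) = 0 := by
    linear_combination -h
  obtain h1 | h1 := mul_eq_zero.1 factored
  · rw [inv_le_iff_one_le_mul₀' hA]
    linarith
  · have hL : L = (u * v)⁻¹ := eq_inv_of_mul_eq_one_right (sub_eq_zero.1 h1)
    rw [hL]
    exact inv_anti₀ hB (by linarith)

theorem levelWeight_nonneg (c : ℕ) : 0 ≤ levelWeight u v c := by
  obtain _ | c := c
  · simp [levelWeight]
  · have := sub_pos.2 hu1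
    have := sub_pos.2 hv1
    have := sub_nonneg.2 (catalyticMotzkin_succ_le hu0 hu1 hv0 hv1 huv c)
    rw [levelWeight]
    positivity

theorem sum_range_levelWeight_le (b : ℕ) :
    ∑ k ∈ Finset.range b, levelWeight u v k ≤ totalWeight u v := by
  have hu := sub_pos.2 hu1
  have hv := sub_pos.2 hv1
  have hs := summable_catalyticMotzkin hu0 hu1 hv0 hv1 huv
  set L := ∑' n, catalyticMotzkin u v n
  have hasSum_succ : HasSum (fun c => levelWeight u v (c + 1))
      (u * (1 - v) / (1 - u) * ((1 - u * v) * L - (L - 1))) := by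
    refine ((hs.hasSum.mul_left _).sub ?_).mul_left _
    simpa [catalyticMotzkin_zero] using (hasSum_nat_add_iff' 1).2 hs.hasSum
  have hasSum := (hasSum_nat_add_iff 1).1 hasSum_succ
  refine (sum_le_hasSum _ (fun c _ => levelWeight_nonneg hu0 hu1 hv0 hv1 huv c) hasSum).trans ?_
  have L_ge := inv_le_tsum_catalyticMotzkin hu0 hu1 hv0 hv1 huv
  calc u * (1 - v) / (1 - u) * ((1 - u * v) * L - (L - 1)) +
        ∑ i ∈ Finset.range 1, levelWeight u v i
      = 1 + u * (1 - v) / (1 - u) * (1 - u * v * L) := by simp [levelWeight]; ring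
    _ ≤ 1 + u * (1 - v) / (1 - u) * (1 - u * v * ((1 - u) * (1 - v))⁻¹) := by gcongr
    _ = totalWeight u v := by rw [totalWeight]; field_simp; ring

theorem isMajorant_levelWeight :
    IsMajorant (u * (1 - v) ^ 2) (v * (1 - u) ^ 2) (totalWeight u v) (levelWeight u v) where
  nonneg := levelWeight_nonneg hu0 hu1 hv0 hv1 huv
  one_le_zero := le_rfl
  sum_range_le := sum_range_levelWeight_le hu0 hu1 hv0 hv1 huv
  step_le c := (levelWeight_succ hu1.ne c).ge

end Majorant

end Catalytic

/-- Binary trees with labelled nodes. They encode the words `σ` for which `stackSort σ` avoids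
`231`: the root stands for the maximal letter, the subtrees for the words on both sides of it. -/
inductive SplitTree
  | nil : SplitTree
  | node (L R : SplitTree) (j : ℕ) : SplitTree
  deriving DecidableEq, Inhabited

namespace SplitTree

open Finset.HasAntidiagonal (antidiagonal mem_antidiagonal)

/-- The number of nodes. -/
def size : SplitTree → ℕ
  | nil => 0
  | node L R _ => L.size + R.size + 1

/-- The positions, apart from the end of the word, where the stack-sorted word that belongs to the
tree can be cut into small letters followed by large ones. -/
def properCuts : SplitTree → Finset ℕ
  | nil => ∅
  | node L R j =>
      L.properCuts ∪ ((insert R.size R.properCuts).filter (j ≤ ·)).image (L.size + ·)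

/-- The positions where the stack-sorted word that belongs to the tree can be cut into small
letters followed by large ones. -/
def cuts (T : SplitTree) : Finset ℕ := insert T.size T.properCuts

/-- The number of proper cuts; it is the exponent of the catalytic variable. -/
def rank (T : SplitTree) : ℕ := T.properCuts.card

/-- The number of cuts at or after position `j`. -/
def tailCuts (T : SplitTree) (j : ℕ) : ℕ := (T.cuts.filter (j ≤ ·)).card

/-- The labels allowed at a node with subtrees `L` and `R`. -/
def labels (L R : SplitTree) : Finset ℕ := if L = nil then {0} else R.cuts

/-- Every node has an allowed label. -/
def Valid : SplitTree → Prop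
  | nil => True
  | node L R j => L.Valid ∧ R.Valid ∧ j ∈ labels L R

/-- The product over all nodes of `x` for those without left child and `y` for the others. -/
def weight (x y : ℝ) : SplitTree → ℝ
  | nil => 1
  | node L R _ => (if L = nil then x else y) * (L.weight x y * R.weight x y)

/-- The valid trees of height at most `N`. -/
def trees : ℕ → Finset SplitTree
  | 0 => {nil}
  | N + 1 => insert nil (((trees N ×ˢ trees N).sigma fun LR => labels LR.1 LR.2).image
      fun t => node t.1.1 t.1.2 t.2)

theorem lt_size_of_mem_properCuts {T : SplitTree} {m : ℕ} (h : m ∈ T.properCuts) :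
    m < T.size := by
  induction T generalizing m with
  | nil => simp [properCuts] at h
  | node L R j ihL ihR =>
    simp only [properCuts, Finset.mem_union, Finset.mem_image, Finset.mem_filter,
      Finset.mem_insert] at h
    rw [size]
    obtain h | ⟨k, ⟨rfl | hk, -⟩, rfl⟩ := h
    · have := ihL h
      omega
    · omega
    · have := ihR hk
      omega

theorem mem_cuts_node {L R : SplitTree} {j m : ℕ} :
    m ∈ (node L R j).cuts ↔ m = L.size + R.size + 1 ∨ m ∈ L.properCuts ∨
      ∃ k ∈ R.cuts, j ≤ k ∧ L.size + k = m := by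
  simp only [cuts, properCuts, size, Finset.mem_insert, Finset.mem_union, Finset.mem_image,
    Finset.mem_filter, and_assoc]

theorem card_cuts (T : SplitTree) : T.cuts.card = T.rank + 1 :=
  Finset.card_insert_of_notMem fun h => (lt_size_of_mem_properCuts h).false

theorem rank_node (L R : SplitTree) (j : ℕ) : (node L R j).rank = L.rank + R.tailCuts j := by
  rw [rank, properCuts, Finset.card_union_of_disjoint,
    Finset.card_image_of_injective _ (add_right_injective _)]
  · rfl
  · simp only [Finset.disjoint_left, Finset.mem_image, not_exists, not_and]
    rintro m hm k - rfl
    exact absurd (lt_size_of_mem_properCuts hm) (by omega)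

theorem rank_nil : nil.rank = 0 := rfl

theorem tailCuts_zero (T : SplitTree) : T.tailCuts 0 = T.rank + 1 := by
  simp [tailCuts, card_cuts]

theorem tailCuts_le (T : SplitTree) (j : ℕ) : T.tailCuts j ≤ T.rank + 1 :=
  T.card_cuts ▸ Finset.card_filter_le _ _

theorem tailCuts_pos {T : SplitTree} {j : ℕ} (hj : j ∈ T.cuts) : 0 < T.tailCuts j :=
  Finset.card_pos.2 ⟨j, Finset.mem_filter.2 ⟨hj, le_rfl⟩⟩

theorem tailCuts_strictAntiOn (T : SplitTree) : StrictAntiOn T.tailCuts T.cuts := by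
  intro i hi j _ hij
  refine Finset.card_lt_card (Finset.ssubset_iff_of_subset ?_ |>.2 ⟨i, ?_, ?_⟩)
  · exact Finset.monotone_filter_right _ fun k _ => hij.le.trans
  · exact Finset.mem_filter.2 ⟨hi, le_rfl⟩
  · exact fun h => hij.not_ge (Finset.mem_filter.1 h).2

theorem weight_nonneg {x y : ℝ} (hx : 0 ≤ x) (hy : 0 ≤ y) (T : SplitTree) :
    0 ≤ T.weight x y := by
  induction T with
  | nil => simp [weight]
  | node L R j ihL ihR =>
    rw [weight]
    split_ifs <;> positivity

theorem nil_mem_trees (N : ℕ) : nil ∈ trees N := by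
  cases N <;> simp [trees]

theorem node_mem_trees {L R : SplitTree} {j N : ℕ} :
    node L R j ∈ trees (N + 1) ↔ L ∈ trees N ∧ R ∈ trees N ∧ j ∈ labels L R := by
  simp [trees, and_assoc]

theorem mem_trees {T : SplitTree} (hT : T.Valid) {N : ℕ} (hN : T.size ≤ N) : T ∈ trees N := by
  induction T generalizing N with
  | nil => exact nil_mem_trees N
  | node L R j ihL ihR =>
    obtain ⟨hL, hR, hj⟩ := hT
    rw [size] at hN
    obtain ⟨N, rfl⟩ : ∃ M, N = M + 1 := ⟨N - 1, by omega⟩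
    exact node_mem_trees.2 ⟨ihL hL (by omega), ihR hR (by omega), hj⟩

theorem rank_pos_of_mem_trees {T : SplitTree} {N : ℕ} (hT : T ∈ trees N) (hne : T ≠ nil) :
    0 < T.rank := by
  obtain _ | N := N
  · exact absurd (Finset.mem_singleton.1 hT) hne
  · obtain _ | ⟨L, R, j⟩ := T
    · exact absurd rfl hne
    · have hj := (node_mem_trees.1 hT).2.2
      rw [rank_node]
      by_cases hL : L = nil
      · rw [labels, if_pos hL, Finset.mem_singleton] at hj
        rw [hj, tailCuts_zero]
        omega
      · rw [labels, if_neg hL] at hj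
        exact Nat.add_pos_right _ (tailCuts_pos hj)

theorem sum_trees_succ {M : Type*} [AddCommMonoid M] (f : SplitTree → M) (N : ℕ) :
    ∑ T ∈ trees (N + 1), f T =
      f nil + ∑ L ∈ trees N, ∑ R ∈ trees N, ∑ j ∈ labels L R, f (node L R j) := by
  rw [trees, Finset.sum_insert (by simp), Finset.sum_image, Finset.sum_sigma, Finset.sum_product]
  rintro ⟨⟨L, R⟩, j⟩ - ⟨⟨L', R'⟩, j'⟩ - h
  simpa [and_assoc] using h

theorem card_filter_rank_node_le (L R : SplitTree) (c : ℕ) :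
    (R.cuts.filter fun j => (node L R j).rank = c + 1).card ≤
      ((antidiagonal c).filter fun ij => ij.1 = L.rank ∧ ij.2 ≤ R.rank).card := by
  refine Finset.card_le_card_of_injOn (fun j => (L.rank, R.tailCuts j - 1)) ?_ ?_
  · intro j hj
    obtain ⟨hj, hjc⟩ := Finset.mem_filter.1 hj
    have := tailCuts_pos hj
    have := R.tailCuts_le j
    rw [rank_node] at hjc
    simp only [Finset.coe_filter, mem_antidiagonal, Set.mem_ofPred_eq, true_and]
    omega
  · intro i hi j hj hij
    obtain ⟨hi, -⟩ := Finset.mem_filter.1 hi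
    obtain ⟨hj, -⟩ := Finset.mem_filter.1 hj
    have := tailCuts_pos hi
    have := tailCuts_pos hj
    have := congrArg Prod.snd hij
    exact R.tailCuts_strictAntiOn.injOn hi hj (by dsimp only at this; omega)

theorem sum_labels_weight_le {x y : ℝ} (hx : 0 ≤ x) (hy : 0 ≤ y) {L : SplitTree}
    (hL : L ≠ nil) (R : SplitTree) (c : ℕ) :
    ∑ j ∈ labels L R with (node L R j).rank = c + 1, (node L R j).weight x y ≤
      ∑ ij ∈ antidiagonal c with ij.1 = L.rank ∧ ij.2 ≤ R.rank,
        y * (L.weight x y * R.weight x y) := by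
  have := weight_nonneg hx hy L
  have := weight_nonneg hx hy R
  simp only [labels, weight, hL, if_false, Finset.sum_const, nsmul_eq_mul]
  gcongr
  exact card_filter_rank_node_le L R c

theorem sum_rank_eq_zero (x y : ℝ) (N : ℕ) :
    ∑ T ∈ trees N with T.rank = 0, T.weight x y = 1 := by
  have : (trees N).filter (·.rank = 0) = {nil} := by
    ext T
    rw [Finset.mem_filter, Finset.mem_singleton]
    refine ⟨fun h => ?_, ?_⟩
    · by_contra hne
      exact (rank_pos_of_mem_trees h.1 hne).ne' h.2
    · rintro rfl
      exact ⟨nil_mem_trees N, rfl⟩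
  rw [this, Finset.sum_singleton, weight]

theorem sum_rank_eq_succ_le {x y : ℝ} (hx : 0 ≤ x) (hy : 0 ≤ y) (N c : ℕ) :
    ∑ T ∈ trees (N + 1) with T.rank = c + 1, T.weight x y ≤
      x * ∑ R ∈ trees N with R.rank = c, R.weight x y +
        y * ∑ ij ∈ antidiagonal c,
          (∑ L ∈ (trees N).erase nil with L.rank = ij.1, L.weight x y) *
            ∑ R ∈ trees N with ij.2 ≤ R.rank, R.weight x y := by
  rw [Finset.sum_filter, sum_trees_succ, if_neg (by simp [rank_nil]), zero_add,
    ← Finset.add_sum_erase _ _ (nil_mem_trees N)]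
  refine add_le_add (le_of_eq ?_) ?_
  · simp [labels, rank_node, tailCuts_zero, weight, rank_nil, Finset.mul_sum, Finset.sum_filter]
  · calc _ ≤ ∑ L ∈ (trees N).erase nil, ∑ R ∈ trees N,
          ∑ ij ∈ antidiagonal c with ij.1 = L.rank ∧ ij.2 ≤ R.rank,
            y * (L.weight x y * R.weight x y) := by
          gcongr with L hL R
          rw [← Finset.sum_filter]
          exact sum_labels_weight_le hx hy (Finset.ne_of_mem_erase hL) R c
      _ = _ := by
          simp only [Finset.sum_filter (s := antidiagonal c)]
          rw [Finset.sum_congr rfl fun L _ => Finset.sum_comm, Finset.sum_comm, Finset.mul_sum]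
          refine Finset.sum_congr rfl fun ij _ => ?_
          rw [Finset.sum_filter, Finset.sum_filter, Finset.sum_mul_sum, Finset.mul_sum]
          refine Finset.sum_congr rfl fun L _ => ?_
          rw [Finset.mul_sum]
          refine Finset.sum_congr rfl fun R _ => ?_
          by_cases hi : ij.1 = L.rank <;> by_cases hj : ij.2 ≤ R.rank <;>
            simp [hi, hj, eq_comm (a := L.rank)]

end SplitTree

namespace IsMajorant

open SplitTree

variable {x y S : ℝ} {g : ℕ → ℝ}

theorem sum_filter_le_le (h : IsMajorant x y S g) {α : Type*} {s : Finset α} {r : α → ℕ}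
    {w : α → ℝ} (hs : ∀ c, ∑ a ∈ s with r a = c, w a ≤ g c) (b : ℕ) :
    ∑ a ∈ s with b ≤ r a, w a ≤ S - ∑ k ∈ Finset.range b, g k := by
  set M := max b (s.sup r + 1)
  have maps : ∀ a ∈ s.filter (b ≤ r ·), r a ∈ Finset.Ico b M := fun a ha => by
    obtain ⟨ha, hb⟩ := Finset.mem_filter.1 ha
    exact Finset.mem_Ico.2 ⟨hb, (Nat.lt_succ_of_le (Finset.le_sup ha)).trans_le (le_max_right ..)⟩
  calc ∑ a ∈ s with b ≤ r a, w a
      = ∑ c ∈ Finset.Ico b M, ∑ a ∈ s with r a = c, w a := by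
        rw [← Finset.sum_fiberwise_of_maps_to maps]
        refine Finset.sum_congr rfl fun c hc => ?_
        rw [Finset.filter_filter]
        refine Finset.sum_congr (Finset.filter_congr fun a _ => ?_) fun _ _ => rfl
        exact and_iff_right_of_imp fun hac => hac ▸ (Finset.mem_Ico.1 hc).1
    _ ≤ ∑ c ∈ Finset.Ico b M, g c := Finset.sum_le_sum fun c _ => hs c
    _ = ∑ k ∈ Finset.range M, g k - ∑ k ∈ Finset.range b, g k :=
        Finset.sum_Ico_eq_sub _ (le_max_left ..)
    _ ≤ S - ∑ k ∈ Finset.range b, g k := sub_le_sub_right (h.sum_range_le M) _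

theorem sum_level_le (h : IsMajorant x y S g) (hx : 0 ≤ x) (hy : 0 ≤ y) (N c : ℕ) :
    ∑ T ∈ trees N with T.rank = c, T.weight x y ≤ g c := by
  induction N generalizing c with
  | zero =>
    obtain _ | c := c
    · exact (sum_rank_eq_zero x y 0).trans_le h.one_le_zero
    · simpa [trees, Finset.sum_filter, rank_nil] using h.nonneg (c + 1)
  | succ N ih =>
    obtain _ | c := c
    · exact (sum_rank_eq_zero x y (N + 1)).trans_le h.one_le_zero
    · refine (sum_rank_eq_succ_le hx hy N c).trans (le_trans ?_ (h.step_le c))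
      gcongr with ij
      · exact ih c
      · exact Finset.sum_nonneg fun R _ => weight_nonneg hx hy R
      · split_ifs
        exacts [le_rfl, h.nonneg _]
      · split_ifs with h0
        · refine (Finset.sum_eq_zero fun L hL => ?_).le
          obtain ⟨hL, hLc⟩ := Finset.mem_filter.1 hL
          obtain ⟨hne, hL⟩ := Finset.mem_erase.1 hL
          exact absurd (hLc.trans h0) (rank_pos_of_mem_trees hL hne).ne'
        · refine le_trans (Finset.sum_le_sum_of_subset_of_nonneg ?_ ?_) (ih ij.1)
          · exact Finset.filter_subset_filter _ (Finset.erase_subset _ _)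
          · exact fun L _ _ => weight_nonneg hx hy L
      · exact h.sum_filter_le_le ih ij.2

theorem sum_weight_trees_le (h : IsMajorant x y S g) (hx : 0 ≤ x) (hy : 0 ≤ y) (N : ℕ) :
    ∑ T ∈ trees N, T.weight x y ≤ S := by
  simpa using h.sum_filter_le_le (h.sum_level_le hx hy N) 0

end IsMajorant

theorem push_append_out (x : ℕ) (st o out : List ℕ) :
    push x st (o ++ out) = ((push x st out).1, o ++ (push x st out).2) := by
  induction st generalizing out with
  | nil => rfl
  | cons t s ih =>
    simp only [push]
    split_ifs
    · rw [List.append_assoc, ih]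
    · rfl

theorem push_stack_append {x n : ℕ} (h : x < n) (st out : List ℕ) :
    push x (st ++ [n]) out = ((push x st out).1 ++ [n], (push x st out).2) := by
  induction st generalizing out with
  | nil => simp [push, Nat.lt_asymm h]
  | cons t s ih =>
    simp only [push, List.cons_append]
    split_ifs
    · rw [ih]
    · rfl

theorem push_of_forall_lt {n : ℕ} (st out : List ℕ) (h : ∀ x ∈ st, x < n) :
    push n st out = ([n], out ++ st) := by
  induction st generalizing out with
  | nil => simp [push]
  | cons t s ih =>
    rw [List.forall_mem_cons] at h
    simp [push, h.1, ih _ h.2]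

theorem eq_or_mem_of_mem_push {x y : ℕ} {st out : List ℕ} (h : y ∈ (push x st out).1) :
    y = x ∨ y ∈ st := by
  induction st generalizing out with
  | nil => simpa [push] using h
  | cons t s ih =>
    simp only [push] at h
    split_ifs at h
    · exact (ih h).imp_right (List.mem_cons_of_mem t)
    · simpa using h

theorem sortAux_append_out (l st o out : List ℕ) :
    sortAux l st (o ++ out) = o ++ sortAux l st out := by
  induction l generalizing st out with
  | nil => simp [sortAux]
  | cons x l ih => simp only [sortAux, push_append_out, ih]

theorem sortAux_stack_append {n : ℕ} (l st out : List ℕ) (h : ∀ x ∈ l, x < n) :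
    sortAux l (st ++ [n]) out = sortAux l st out ++ [n] := by
  induction l generalizing st out with
  | nil => simp [sortAux]
  | cons x l ih =>
    rw [List.forall_mem_cons] at h
    simp only [sortAux, push_stack_append h.1, ih _ _ h.2]

theorem sortAux_append_cons {n : ℕ} (l r st out : List ℕ) (hl : ∀ x ∈ l, x < n)
    (hr : ∀ x ∈ r, x < n) (hst : ∀ x ∈ st, x < n) :
    sortAux (l ++ n :: r) st out = sortAux l st out ++ stackSort r ++ [n] := by
  induction l generalizing st out with
  | nil =>
    have stack_n := sortAux_stack_append r [] (out ++ st) hr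
    have out_st := sortAux_append_out r [] (out ++ st) []
    simp only [List.nil_append, List.append_nil] at stack_n out_st
    simp only [List.nil_append, sortAux, push_of_forall_lt st out hst, stack_n, out_st, stackSort]
  | cons x l ih =>
    rw [List.forall_mem_cons] at hl
    simp only [List.cons_append, sortAux]
    refine ih _ _ hl.2 fun y hy => ?_
    obtain rfl | hy := eq_or_mem_of_mem_push hy
    exacts [hl.1, hst y hy]

theorem stackSort_append_cons {n : ℕ} {l r : List ℕ} (hl : ∀ x ∈ l, x < n)
    (hr : ∀ x ∈ r, x < n) :
    stackSort (l ++ n :: r) = stackSort l ++ stackSort r ++ [n] :=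
  sortAux_append_cons l r [] [] hl hr (by simp)

theorem stackSort_nil : stackSort [] = [] := rfl

@[elab_as_elim]
theorem nodup_max_induction {α : Type*} [LinearOrder α] {P : ∀ p : List α, p.Nodup → Prop}
    (nil : P [] List.nodup_nil)
    (split : ∀ (l : List α) (n : α) (r : List α) (h : (l ++ n :: r).Nodup) (hl : l.Nodup)
      (hr : r.Nodup), l.Disjoint r → (∀ x ∈ l, x < n) → (∀ x ∈ r, x < n) →
      P l hl → P r hr → P (l ++ n :: r) h)
    (p : List α) (hp : p.Nodup) : P p hp := by
  induction h : p.length using Nat.strong_induction_on generalizing p with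
  | _ N ih =>
    obtain rfl | hne := eq_or_ne p []
    · exact nil
    · obtain ⟨n, hn, hmax⟩ := p.toFinset.exists_max_image id (by simpa using hne)
      simp only [List.mem_toFinset, id] at hn hmax
      obtain ⟨l, r, rfl⟩ := List.append_of_mem hn
      obtain ⟨hnlr, hlr⟩ := List.nodup_cons.1 (List.nodup_middle.1 hp)
      have lt_n : ∀ x ∈ l ++ r, x < n := fun x hx =>
        lt_of_le_of_ne (hmax x (by simp at hx ⊢; tauto)) (by rintro rfl; exact hnlr hx)
      obtain ⟨hl, hr, hdisj⟩ := List.nodup_append'.1 hlr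
      simp only [List.length_append, List.length_cons] at h
      exact split l n r hp hl hr hdisj (fun x hx => lt_n x (List.mem_append_left r hx))
        (fun x hx => lt_n x (List.mem_append_right l hx)) (ih _ (by omega) l hl rfl)
        (ih _ (by omega) r hr rfl)

theorem stackSort_perm {p : List ℕ} (hp : p.Nodup) : (stackSort p).Perm p := by
  induction p, hp using nodup_max_induction with
  | nil => exact .nil
  | split l n r _ _ _ _ hln hrn ihl ihr =>
    rw [stackSort_append_cons hln hrn, List.append_assoc]
    exact ihl.append ((List.perm_append_singleton _ _).trans (ihr.cons n))

theorem stackSort_eq_nil {p : List ℕ} (hp : p.Nodup) : stackSort p = [] ↔ p = [] :=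
  ⟨fun h => (h ▸ stackSort_perm hp).nil_eq.symm, fun h => h ▸ stackSort_nil⟩

section AscTops

variable {α : Type*} [LinearOrder α]

/-- The ascent tops of a word, that is, the letters directly preceded by a smaller letter. The
descent tops of `p` are the ascent tops of `p.reverse`. -/
def ascTops : List α → Finset α
  | [] => ∅
  | [_] => ∅
  | x :: y :: l => if x < y then insert y (ascTops (y :: l)) else ascTops (y :: l)

theorem ascTops_cons_subset (x : α) (l : List α) : ascTops l ⊆ ascTops (x :: l) := by
  obtain _ | ⟨y, l⟩ := l
  · rfl
  · rw [ascTops]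
    split_ifs
    exacts [Finset.subset_insert .., subset_rfl]

theorem mem_of_mem_ascTops {x : α} {l : List α} (h : x ∈ ascTops l) : x ∈ l := by
  induction l using ascTops.induct with
  | case1 | case2 => simp [ascTops] at h
  | case3 y z l hyz ih =>
    rw [ascTops, if_pos hyz, Finset.mem_insert] at h
    obtain rfl | h := h
    exacts [by simp, List.mem_cons_of_mem y (ih h)]
  | case4 y z l hyz ih =>
    rw [ascTops, if_neg hyz] at h
    exact List.mem_cons_of_mem y (ih h)

theorem ascTops_cons_of_forall_lt {n : α} {r : List α} (hr : ∀ x ∈ r, x < n) :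
    ascTops (n :: r) = ascTops r := by
  obtain _ | ⟨y, r⟩ := r
  · rfl
  · rw [ascTops, if_neg (hr y (by simp)).asymm]

theorem ascTops_append_cons {n : α} {l r : List α} (hl : ∀ x ∈ l, x < n) (hr : ∀ x ∈ r, x < n) :
    ascTops (l ++ n :: r) = ascTops l ∪ ascTops r ∪ if l = [] then ∅ else {n} := by
  induction l using ascTops.induct with
  | case1 => simp [ascTops, ascTops_cons_of_forall_lt hr]
  | case2 x =>
    have hxn : x < n := hl x (by simp)
    simp [ascTops, hxn, ascTops_cons_of_forall_lt hr]
  | case3 x y l hxy ih =>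
    rw [List.forall_mem_cons] at hl
    simpa [ascTops, hxy] using congrArg (insert y) (ih hl.2)
  | case4 x y l hxy ih =>
    rw [List.forall_mem_cons] at hl
    simpa [ascTops, hxy] using ih hl.2

theorem ascTops_subset_append (l r : List α) : ascTops l ∪ ascTops r ⊆ ascTops (l ++ r) := by
  induction l using ascTops.induct with
  | case1 => simp [ascTops]
  | case2 x => simpa [ascTops] using ascTops_cons_subset x r
  | case3 x y l hxy ih => simpa [ascTops, hxy] using Finset.insert_subset_insert y ih
  | case4 x y l hxy ih => simpa [ascTops, hxy] using ih

theorem ascTops_reverse_append_cons {n : α} {l r : List α} (hl : ∀ x ∈ l, x < n)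
    (hr : ∀ x ∈ r, x < n) :
    ascTops (l ++ n :: r).reverse =
      ascTops l.reverse ∪ ascTops r.reverse ∪ if r = [] then ∅ else {n} := by
  have := ascTops_append_cons (l := r.reverse) (r := l.reverse) (by simpa using hr)
    (by simpa using hl)
  simpa [Finset.union_comm (ascTops r.reverse)] using this

theorem card_ascTops_append_cons {n : α} {l r : List α} (hlr : l.Disjoint r)
    (hl : ∀ x ∈ l, x < n) (hr : ∀ x ∈ r, x < n) :
    (ascTops (l ++ n :: r)).card =
      (ascTops l).card + (ascTops r).card + if l = [] then 0 else 1 := by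
  rw [ascTops_append_cons hl hr, Finset.card_union_of_disjoint, Finset.card_union_of_disjoint]
  · split_ifs <;> simp
  · exact Finset.disjoint_left.2 fun x hxl hxr =>
      hlr (mem_of_mem_ascTops hxl) (mem_of_mem_ascTops hxr)
  · refine Finset.disjoint_left.2 fun x hx hxn => ?_
    obtain rfl : x = n := by
      split_ifs at hxn
      · simp at hxn
      · simpa using hxn
    obtain hx | hx := Finset.mem_union.1 hx
    exacts [(hl x (mem_of_mem_ascTops hx)).false, (hr x (mem_of_mem_ascTops hx)).false]

theorem card_ascTops_add_card_ascTops_reverse {p : List α} (hp : p.Nodup) :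
    (ascTops p).card + (ascTops p.reverse).card = p.length - 1 := by
  induction p, hp using nodup_max_induction with
  | nil => rfl
  | split l n r _ _ _ hlr hln hrn ihl ihr =>
    have card_reverse := card_ascTops_append_cons (l := r.reverse) (r := l.reverse)
      (by simpa using hlr.symm) (by simpa using hrn) (by simpa using hln)
    have := List.length_eq_zero_iff (l := l)
    have := List.length_eq_zero_iff (l := r)
    simp only [List.reverse_append, List.reverse_cons, List.append_assoc, List.singleton_append,
      card_ascTops_append_cons hlr hln hrn, card_reverse, List.reverse_eq_nil_iff,
      List.length_append, List.length_cons]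
    grind

theorem ascTops_union_subset_stackSort {p : List ℕ} (hp : p.Nodup) :
    ascTops p ∪ ascTops p.reverse ⊆ ascTops (stackSort p) := by
  induction p, hp using nodup_max_induction with
  | nil => rfl
  | split l n r _ hl hr _ hln hrn ihl ihr =>
    have lt_n : ∀ x ∈ stackSort l ++ stackSort r, x < n := by
      simp only [List.mem_append, (stackSort_perm hl).mem_iff, (stackSort_perm hr).mem_iff]
      exact fun x hx => hx.elim (hln x) (hrn x)
    have subset_append := ascTops_subset_append (stackSort l) (stackSort r)
    rw [stackSort_append_cons hln hrn, ascTops_append_cons lt_n (by simp),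
      ascTops_append_cons hln hrn, ascTops_reverse_append_cons hln hrn]
    simp only [List.append_eq_nil_iff, stackSort_eq_nil hl, stackSort_eq_nil hr]
    grind

end AscTops

section Fertility

/-- One step of the reconstruction of a word `p` from `stackSort p`, its ascent tops `A` and its
descent tops `D`. The stack holds the reconstructed nonempty words; those on the right and on the
left of the letter `x` are on top of it if `x ∈ D` and `x ∈ A`, respectively. -/
def rebuildStep (A D : Finset ℕ) (stack : List (List ℕ)) (x : ℕ) : List (List ℕ) :=
  let rest := if x ∈ D then stack.tail else stack
  let right := if x ∈ D then stack.headI else []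
  let left := if x ∈ A then rest.headI else []
  (left ++ x :: right) :: if x ∈ A then rest.tail else rest

theorem foldl_rebuildStep_stackSort {A D : Finset ℕ} {p : List ℕ} (hp : p.Nodup)
    (hA : ∀ x ∈ p, x ∈ A ↔ x ∈ ascTops p) (hD : ∀ x ∈ p, x ∈ D ↔ x ∈ ascTops p.reverse)
    (stack : List (List ℕ)) :
    (stackSort p).foldl (rebuildStep A D) stack = if p = [] then stack else p :: stack := by
  induction p, hp using nodup_max_induction generalizing stack with
  | nil => rfl
  | split l n r _ _ _ hlr hln hrn ihl ihr =>
    have notMem {q : List ℕ} {x : ℕ} (h : x ∉ q) : x ∉ ascTops q ∧ x ∉ ascTops q.reverse :=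
      ⟨fun hx => h (mem_of_mem_ascTops hx), fun hx => h (by simpa using mem_of_mem_ascTops hx)⟩
    have hnl : n ∉ l := fun h => (hln n h).false
    have hnr : n ∉ r := fun h => (hrn n h).false
    simp only [List.mem_append, List.mem_cons, ascTops_append_cons hln hrn, Finset.mem_union] at hA
    simp only [List.mem_append, List.mem_cons, ascTops_reverse_append_cons hln hrn,
      Finset.mem_union] at hD
    have hAl : ∀ x ∈ l, x ∈ A ↔ x ∈ ascTops l := fun x hx => by
      simp [hA x (.inl hx), notMem (hlr hx), apply_ite (x ∈ ·), ne_of_mem_of_not_mem hx hnl]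
    have hDl : ∀ x ∈ l, x ∈ D ↔ x ∈ ascTops l.reverse := fun x hx => by
      simp [hD x (.inl hx), notMem (hlr hx), apply_ite (x ∈ ·), ne_of_mem_of_not_mem hx hnl]
    have hAr : ∀ x ∈ r, x ∈ A ↔ x ∈ ascTops r := fun x hx => by
      simp [hA x (.inr (.inr hx)), notMem (hlr.symm hx), apply_ite (x ∈ ·),
        ne_of_mem_of_not_mem hx hnr]
    have hDr : ∀ x ∈ r, x ∈ D ↔ x ∈ ascTops r.reverse := fun x hx => by
      simp [hD x (.inr (.inr hx)), notMem (hlr.symm hx), apply_ite (x ∈ ·),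
        ne_of_mem_of_not_mem hx hnr]
    have hnA : n ∈ A ↔ l ≠ [] := by
      simp [hA n (.inr (.inl rfl)), notMem hnl, notMem hnr, apply_ite (n ∈ ·)]
    have hnD : n ∈ D ↔ r ≠ [] := by
      simp [hD n (.inr (.inl rfl)), notMem hnl, notMem hnr, apply_ite (n ∈ ·)]
    rw [stackSort_append_cons hln hrn, List.foldl_append, List.foldl_append, ihl hAl hDl,
      ihr hAr hDr]
    by_cases hl : l = [] <;> by_cases hr : r = [] <;> simp [rebuildStep, hnA, hnD, hl, hr]

theorem eq_of_stackSort_eq {p q : List ℕ} (hp : p.Nodup) (hq : q.Nodup)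
    (hs : stackSort p = stackSort q) (hA : ascTops p = ascTops q)
    (hD : ascTops p.reverse = ascTops q.reverse) : p = q := by
  have rebuild_p := foldl_rebuildStep_stackSort hp (A := ascTops p) (D := ascTops p.reverse)
    (fun _ _ => .rfl) (fun _ _ => .rfl) []
  have rebuild_q := foldl_rebuildStep_stackSort hq (A := ascTops q) (D := ascTops q.reverse)
    (fun _ _ => .rfl) (fun _ _ => .rfl) []
  rw [hs, hA, hD, rebuild_q] at rebuild_p
  split_ifs at rebuild_p <;> simp_all

theorem card_preimage_stackSort_le (σ : List ℕ) (F : Finset (List ℕ))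
    (hF : ∀ p ∈ F, p.Nodup ∧ stackSort p = σ) :
    F.card ≤ (2 * (ascTops σ).card).choose (σ.length - 1) := by
  calc F.card
      ≤ (((ascTops σ).disjSum (ascTops σ)).powersetCard (σ.length - 1)).card := by
        refine Finset.card_le_card_of_injOn
          (fun p => (ascTops p).disjSum (ascTops p.reverse)) ?_ ?_
        · intro p hp
          obtain ⟨hp, rfl⟩ := hF p hp
          have h := Finset.union_subset_iff.1 (ascTops_union_subset_stackSort hp)
          rw [Finset.mem_coe, Finset.mem_powersetCard]
          refine ⟨Finset.disjSum_mono h.1 h.2, ?_⟩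
          rw [Finset.card_disjSum, card_ascTops_add_card_ascTops_reverse hp,
            (stackSort_perm hp).length_eq]
        · intro p hp q hq hpq
          obtain ⟨hp, hpσ⟩ := hF p hp
          obtain ⟨hq, hqσ⟩ := hF q hq
          obtain ⟨hA, hD⟩ := Finset.disjSum_inj.1 hpq
          exact eq_of_stackSort_eq hp hq (hpσ.trans hqσ.symm) hA hD
    _ = (2 * (ascTops σ).card).choose (σ.length - 1) := by
        rw [Finset.card_powersetCard, Finset.card_disjSum, two_mul]

/-- The permutations of length `n` that are sorted by `k` passes through a stack. -/
def sortable (k n : ℕ) : Finset (List ℕ) :=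
  (List.range' 1 n).permutations.toFinset.filter (stackSort^[k] · = List.range' 1 n)

theorem mem_sortable {k n : ℕ} {p : List ℕ} :
    p ∈ sortable k n ↔ p.Perm (List.range' 1 n) ∧ stackSort^[k] p = List.range' 1 n := by
  simp [sortable]

theorem nodup_of_mem_sortable {k n : ℕ} {p : List ℕ} (hp : p ∈ sortable k n) : p.Nodup :=
  (mem_sortable.1 hp).1.nodup_iff.2 List.nodup_range'

theorem length_of_mem_sortable {k n : ℕ} {p : List ℕ} (hp : p ∈ sortable k n) : p.length = n :=
  (mem_sortable.1 hp).1.length_eq.trans List.length_range'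

theorem stackSort_mem_sortable {k n : ℕ} {p : List ℕ} (hp : p ∈ sortable (k + 1) n) :
    stackSort p ∈ sortable k n :=
  mem_sortable.2 ⟨(stackSort_perm (nodup_of_mem_sortable hp)).trans (mem_sortable.1 hp).1,
    (mem_sortable.1 hp).2⟩

theorem W₃_eq_card_sortable (n : ℕ) : W₃ n = (sortable 3 n).card := by
  rw [W₃, ← Set.ncard_coe_finset]
  congr 1
  ext p
  simp [mem_sortable]

theorem card_sortable_succ_le (k n : ℕ) :
    (sortable (k + 1) n).card ≤
      ∑ σ ∈ sortable k n, (2 * (ascTops σ).card).choose (n - 1) := by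
  rw [Finset.card_eq_sum_card_fiberwise fun p => stackSort_mem_sortable]
  refine Finset.sum_le_sum fun σ hσ => ?_
  rw [← length_of_mem_sortable hσ]
  refine card_preimage_stackSort_le σ _ fun p hp => ?_
  obtain ⟨hp, hpσ⟩ := Finset.mem_filter.1 hp
  rw [length_of_mem_sortable hσ] at hp
  exact ⟨nodup_of_mem_sortable hp, hpσ⟩

theorem choose_mul_pow_le (m k : ℕ) {t : ℝ} (ht : 0 ≤ t) : m.choose k * t ^ k ≤ (1 + t) ^ m := by
  obtain hk | hk := le_or_gt k m
  · rw [add_comm, add_pow]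
    refine le_of_eq_of_le ?_ (Finset.single_le_sum (fun i _ => by positivity)
      (Finset.mem_range_succ_iff.2 hk))
    simp [mul_comm]
  · rw [Nat.choose_eq_zero_of_lt hk]
    simpa using by positivity

end Fertility

section AlmostBelow

variable {α : Type*} [LinearOrder α]

/-- All elements of `s` except for its maximum are smaller than the elements of `t`, and this
maximum exceeds exactly `j` elements of `t`. -/
def AlmostBelow (s t : Finset α) (j : ℕ) : Prop :=
  s.Nonempty → ∃ a ∈ s, (∀ x ∈ s, x ≠ a → x < a ∧ ∀ y ∈ t, x < y) ∧ (t.filter (· < a)).card = j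

theorem strictMonoOn_card_filter_lt (s : Finset α) :
    StrictMonoOn (fun a => (s.filter (· < a)).card) s := by
  intro a ha b _ hab
  refine Finset.card_lt_card (Finset.ssubset_iff_of_subset ?_ |>.2 ⟨a, ?_, ?_⟩)
  · exact Finset.monotone_filter_right _ fun x _ hx => hx.trans hab
  · exact Finset.mem_filter.2 ⟨ha, hab⟩
  · simp

theorem AlmostBelow.mem_iff {s t : Finset α} {j : ℕ} (h : AlmostBelow s t j) (hs : s.Nonempty)
    (hst : Disjoint s t) {x : α} :
    x ∈ s ↔ x ∈ s ∪ t ∧ (((s ∪ t).filter (· < x)).card + 1 < s.card ∨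
      ((s ∪ t).filter (· < x)).card + 1 = s.card + j) := by
  obtain ⟨a, ha, hsa, hj⟩ := h hs
  have card_erase := Finset.card_erase_add_one ha
  have rank_a : ((s ∪ t).filter (· < a)).card + 1 = s.card + j := by
    have : s.filter (· < a) = s.erase a := by grind
    rw [Finset.filter_union, Finset.card_union_of_disjoint
      (hst.mono (Finset.filter_subset _ _) (Finset.filter_subset _ _)), this]
    omega
  constructor
  · refine fun hx => ⟨Finset.mem_union_left t hx, ?_⟩
    obtain rfl | hxa := eq_or_ne x a
    · exact .inr rank_a
    · left
      have below_x : (s ∪ t).filter (· < x) ⊆ (s.erase a).erase x := by grind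
      have := Finset.card_le_card below_x
      have := Finset.card_erase_add_one (Finset.mem_erase.2 ⟨hxa, hx⟩)
      omega
  · rintro ⟨hx, hx' | hx'⟩
    · by_contra hxs
      have above : s.erase a ⊆ (s ∪ t).filter (· < x) := by grind
      have := Finset.card_le_card above
      omega
    · have : x = a := (strictMonoOn_card_filter_lt (s ∪ t)).injOn hx
        (Finset.mem_union_left t ha) (by omega)
      exact this ▸ ha

theorem AlmostBelow.unique {s t s' t' : Finset α} {j : ℕ} (h : AlmostBelow s t j)
    (h' : AlmostBelow s' t' j) (hst : Disjoint s t) (hst' : Disjoint s' t')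
    (union_eq : s ∪ t = s' ∪ t') (card_eq : s.card = s'.card) : s = s' := by
  obtain rfl | hs := s.eq_empty_or_nonempty
  · exact (Finset.card_eq_zero.1 card_eq.symm).symm
  · have hs' : s'.Nonempty := Finset.card_pos.1 (card_eq ▸ hs.card_pos)
    ext x
    rw [h.mem_iff hs hst, h'.mem_iff hs' hst', union_eq, card_eq]

end AlmostBelow

namespace SplitTree

/-- `T` encodes the word `σ`: the root corresponds to the maximal letter, the subtrees encode the
words `l` and `r` on both sides of it, and the label says how far the maximum of `l` reaches
into `r`. -/
def IsCode : SplitTree → List ℕ → Prop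
  | nil, σ => σ = []
  | node L R j, σ => ∃ l n r, σ = l ++ n :: r ∧ (∀ x ∈ l, x < n) ∧ (∀ x ∈ r, x < n) ∧
      AlmostBelow l.toFinset r.toFinset j ∧ L.IsCode l ∧ R.IsCode r

theorem IsCode.length_eq {T : SplitTree} {σ : List ℕ} (h : T.IsCode σ) : σ.length = T.size := by
  induction T generalizing σ with
  | nil => exact h ▸ rfl
  | node L R j ihL ihR =>
    obtain ⟨l, n, r, rfl, -, -, -, hL, hR⟩ := h
    rw [List.length_append, List.length_cons, ihL hL, ihR hR, size, add_assoc]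

theorem IsCode.eq_nil_iff {T : SplitTree} {σ : List ℕ} (h : T.IsCode σ) : T = nil ↔ σ = [] := by
  rw [← List.length_eq_zero_iff, h.length_eq]
  cases T <;> simp [size]

theorem IsCode.weight_eq {T : SplitTree} {σ : List ℕ} (h : T.IsCode σ) (hσ : σ.Nodup) (x q : ℝ) :
    T.weight x (x * q) = x ^ σ.length * q ^ (ascTops σ).card := by
  induction T generalizing σ with
  | nil => simp [show σ = [] from h, weight, ascTops]
  | node L R j ihL ihR =>
    obtain ⟨l, n, r, rfl, hln, hrn, -, hL, hR⟩ := h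
    obtain ⟨hl, hr, hlr⟩ := List.nodup_append'.1 (List.nodup_cons.1 (List.nodup_middle.1 hσ)).2
    rw [weight, ihL hL hl, ihR hR hr, card_ascTops_append_cons hlr hln hrn, List.length_append,
      List.length_cons]
    simp only [hL.eq_nil_iff]
    split_ifs <;> ring

theorem eq_of_perm_append_cons {n n' : ℕ} {l r l' r' : List ℕ}
    (hp : (l ++ n :: r).Perm (l' ++ n' :: r')) (hl : ∀ x ∈ l, x < n) (hr : ∀ x ∈ r, x < n)
    (hl' : ∀ x ∈ l', x < n') (hr' : ∀ x ∈ r', x < n') : n = n' := by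
  have hn : n ∈ l' ++ n' :: r' := hp.mem_iff.1 (by simp)
  have hn' : n' ∈ l ++ n :: r := hp.mem_iff.2 (by simp)
  grind

theorem IsCode.unique {T : SplitTree} {σ σ' : List ℕ} (h : T.IsCode σ) (h' : T.IsCode σ')
    (hp : σ.Perm σ') (hσ : σ.Nodup) : σ = σ' := by
  induction T generalizing σ σ' with
  | nil => exact Eq.trans h (Eq.symm h')
  | node L R j ihL ihR =>
    obtain ⟨l, n, r, rfl, hln, hrn, hj, hL, hR⟩ := h
    obtain ⟨l', n', r', rfl, hln', hrn', hj', hL', hR'⟩ := h'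
    obtain rfl := eq_of_perm_append_cons hp hln hrn hln' hrn'
    have perm_lr : (l ++ r).Perm (l' ++ r') :=
      (List.perm_cons n).1 (List.perm_middle.symm.trans (hp.trans List.perm_middle))
    have hlr := (List.nodup_cons.1 (List.nodup_middle.1 hσ)).2
    obtain ⟨hl, hr, disj⟩ := List.nodup_append'.1 hlr
    obtain ⟨hl', -, disj'⟩ := List.nodup_append'.1 (perm_lr.nodup_iff.1 hlr)
    have toFinset_eq : l.toFinset = l'.toFinset := by
      refine hj.unique hj' (List.disjoint_toFinset_iff_disjoint.2 disj)
        (List.disjoint_toFinset_iff_disjoint.2 disj') ?_ ?_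
      · simpa only [List.toFinset_append] using List.toFinset_eq_of_perm _ _ perm_lr
      · rw [List.toFinset_card_of_nodup hl, List.toFinset_card_of_nodup hl', hL.length_eq,
          hL'.length_eq]
    have perm_l : l.Perm l' := List.perm_of_nodup_nodup_toFinset_eq hl hl' toFinset_eq
    have perm_r : r.Perm r' :=
      (List.perm_append_left_iff l).1 (perm_lr.trans (perm_l.symm.append_right r'))
    rw [ihL hL hL' perm_l hl, ihR hR hR' perm_r hr]

end SplitTree

section Cuts

variable {α : Type*} [LinearOrder α]

/-- The word has no three letters in the relative order `231`. -/
def Avoids231 (w : List α) : Prop :=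
  ∀ b c a, [b, c, a].Sublist w → a < b → ¬b < c

/-- The first `m` letters of `w` exist and are smaller than the other ones. -/
def IsCut (w : List α) (m : ℕ) : Prop :=
  m ≤ w.length ∧ ∀ x ∈ w.take m, ∀ y ∈ w.drop m, x < y

theorem Avoids231.sublist {v w : List α} (h : Avoids231 w) (hvw : v.Sublist w) : Avoids231 v :=
  fun b c a hs => h b c a (hs.trans hvw)

theorem Avoids231.lt_of_append_cons {u v : List α} {a : α} (h : Avoids231 (u ++ a :: v))
    (hu : ∀ x ∈ u, x < a) (huv : u.Disjoint v) : ∀ x ∈ u, ∀ y ∈ v, x < y := by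
  intro x hx y hy
  have := h x a y ((List.singleton_sublist.2 hx).append ((List.singleton_sublist.2 hy).cons_cons a))
  have : x ≠ y := fun hxy => huv hx (hxy ▸ hy)
  grind

theorem Avoids231.exists_eq_append {a : α} {w : List α} (h : Avoids231 (a :: w)) (ha : a ∉ w) :
    ∃ u v, w = u ++ v ∧ (∀ y ∈ u, y < a) ∧ ∀ y ∈ v, a < y := by
  induction w with
  | nil => exact ⟨[], [], by simp⟩
  | cons y w ih =>
    rw [List.mem_cons, not_or] at ha
    obtain hy | hy := lt_or_gt_of_ne ha.1
    · refine ⟨[], y :: w, rfl, by simp, List.forall_mem_cons.2 ⟨hy, fun z hz => ?_⟩⟩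
      have := h a y z (((List.singleton_sublist.2 hz).cons_cons y).cons_cons a)
      have : a ≠ z := fun haz => ha.2 (haz ▸ hz)
      grind
    · obtain ⟨u, v, rfl, hu, hv⟩ := ih (h.sublist ((w.sublist_cons_self y).cons_cons a)) ha.2
      exact ⟨y :: u, v, rfl, List.forall_mem_cons.2 ⟨hy, hu⟩, hv⟩

theorem isCut_zero (w : List α) : IsCut w 0 := by simp [IsCut]

theorem isCut_nil {m : ℕ} : IsCut ([] : List α) m ↔ m = 0 := by simp [IsCut]

theorem isCut_append_of_le {u v : List α} {m : ℕ} (hm : m ≤ u.length) :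
    IsCut (u ++ v) m ↔ IsCut u m ∧ ∀ x ∈ u.take m, ∀ y ∈ v, x < y := by
  simp only [IsCut, List.take_append_of_le_length hm, List.drop_append_of_le_length hm,
    List.length_append, List.mem_append]
  grind

theorem isCut_append_add {u v : List α} {k : ℕ} :
    IsCut (u ++ v) (u.length + k) ↔ IsCut v k ∧ ∀ x ∈ u, ∀ y ∈ v.drop k, x < y := by
  simp only [IsCut, List.take_length_add_append, List.drop_length_add_append,
    List.length_append, List.mem_append]
  grind

theorem isCut_append_singleton {w : List α} {n : α} {m : ℕ} (hn : ∀ x ∈ w, x < n) :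
    IsCut (w ++ [n]) m ↔ m = w.length + 1 ∨ IsCut w m := by
  obtain h | h := le_or_gt m w.length
  · have : ∀ x ∈ w.take m, ∀ y ∈ [n], x < y := by
      simpa using fun x hx => hn x (List.mem_of_mem_take hx)
    rw [isCut_append_of_le h, and_iff_left this, or_iff_right (by omega)]
  · have hm : ¬IsCut w m := fun hm => h.not_ge hm.1
    rw [or_iff_left hm]
    refine ⟨fun h' => ?_, fun h' => ?_⟩
    · have := h'.1
      simp only [List.length_append, List.length_singleton] at this
      omega
    · simp [IsCut, h']

theorem forall_lt_mem_drop_append_iff {u v v' : List α} {a : α} {k : ℕ} (hu : ∀ x ∈ u, x < a)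
    (hv : ∀ y ∈ v, y < a) (hv' : ∀ y ∈ v', a < y) :
    (∀ x ∈ u ++ [a], ∀ y ∈ (v ++ v').drop k, x < y) ↔ v.length ≤ k := by
  constructor
  · refine fun h => not_lt.1 fun hk => ?_
    have mem_drop : v[k] ∈ (v ++ v').drop k := by
      rw [List.drop_append_of_le_length hk.le, List.drop_eq_getElem_cons hk]
      exact List.mem_append_left _ List.mem_cons_self
    exact (h a (by simp) _ mem_drop).asymm (hv _ (List.getElem_mem hk))
  · rintro hk x hx y hy
    obtain ⟨i, rfl⟩ := Nat.exists_eq_add_of_le hk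
    rw [List.drop_length_add_append] at hy
    have := hv' y (List.mem_of_mem_drop hy)
    grind

theorem almostBelow_toFinset {u v v' : List α} {a : α} (hu : ∀ x ∈ u, x < a)
    (huv : ∀ x ∈ u, ∀ y ∈ v ++ v', x < y) (hv : ∀ y ∈ v, y < a) (hv' : ∀ y ∈ v', a < y)
    (hnd : v.Nodup) : AlmostBelow (u ++ [a]).toFinset (v ++ v').toFinset v.length := by
  refine fun _ => ⟨a, by simp, fun x hx hxa => ?_, ?_⟩
  · have hx : x ∈ u := by simpa [hxa] using hx
    exact ⟨hu x hx, by simpa only [List.mem_toFinset] using huv x hx⟩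
  · rw [← List.toFinset_card_of_nodup hnd]
    congr 1
    ext y
    have := hv y
    have := hv' y
    simp only [Finset.mem_filter, List.mem_toFinset, List.mem_append]
    grind

theorem isCut_append_iff {u v v' : List α} {a : α} {m : ℕ} (hu : ∀ x ∈ u, x < a)
    (huv : ∀ x ∈ u, ∀ y ∈ v ++ v', x < y) (hv : ∀ y ∈ v, y < a) (hv' : ∀ y ∈ v', a < y) :
    IsCut (u ++ [a] ++ (v ++ v')) m ↔ IsCut (u ++ [a]) m ∧ m < (u ++ [a]).length ∨
      ∃ k, IsCut (v ++ v') k ∧ v.length ≤ k ∧ (u ++ [a]).length + k = m := by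
  obtain hm | hm := lt_or_ge m (u ++ [a]).length
  · have : ∀ x ∈ (u ++ [a]).take m, ∀ y ∈ v ++ v', x < y := by
      rw [List.length_append, List.length_singleton, Nat.lt_succ_iff] at hm
      rw [List.take_append_of_le_length hm]
      exact fun x hx => huv x (List.mem_of_mem_take hx)
    rw [isCut_append_of_le hm.le, and_iff_left this, or_iff_left (by omega), and_iff_left hm]
  · obtain ⟨k, rfl⟩ := Nat.exists_eq_add_of_le hm
    rw [isCut_append_add, forall_lt_mem_drop_append_iff hu hv hv', or_iff_right (by omega)]
    simp

theorem Avoids231.exists_isCut_append {A B : List α} (h : Avoids231 (A ++ B))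
    (hnd : (A ++ B).Nodup) (hA : ∀ u a, A = u ++ [a] → ∀ x ∈ u, x < a) :
    ∃ j, (A = [] → j = 0) ∧ IsCut B j ∧ AlmostBelow A.toFinset B.toFinset j ∧
      ∀ m, IsCut (A ++ B) m ↔ IsCut A m ∧ m < A.length ∨
        ∃ k, IsCut B k ∧ j ≤ k ∧ A.length + k = m := by
  obtain rfl | ⟨u, a, rfl⟩ := A.eq_nil_or_concat'
  · exact ⟨0, fun _ => rfl, isCut_zero B, fun h => by simp at h, by simp⟩
  · have hu := hA u a rfl
    have h' : Avoids231 (u ++ a :: B) := by simpa using h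
    obtain ⟨-, hB, disj⟩ := List.nodup_append'.1 hnd
    have huB := h'.lt_of_append_cons hu fun x hx => disj (List.mem_append_left _ hx)
    obtain ⟨v, v', rfl, hv, hv'⟩ := (h'.sublist (List.sublist_append_right u _)).exists_eq_append
      (disj (by simp))
    refine ⟨v.length, by simp, ?_,
      almostBelow_toFinset hu huB hv hv' (List.nodup_append'.1 hB).1,
      fun m => isCut_append_iff hu huB hv hv'⟩
    simpa [isCut_zero] using (isCut_append_add (u := v) (v := v') (k := 0)).2
      ⟨isCut_zero v', fun x hx y hy => (hv x hx).trans (hv' y hy)⟩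

end Cuts

theorem lt_of_stackSort_eq_append_singleton {p u : List ℕ} {a : ℕ} (hp : p.Nodup)
    (h : stackSort p = u ++ [a]) : ∀ x ∈ u, x < a := by
  induction p, hp using nodup_max_induction with
  | nil => simp [stackSort_nil] at h
  | split l n r _ hl hr _ hln hrn _ _ =>
    rw [stackSort_append_cons hln hrn] at h
    obtain ⟨rfl, hna⟩ := List.append_inj' h rfl
    obtain rfl : n = a := by simpa using hna
    simp only [List.mem_append, (stackSort_perm hl).mem_iff, (stackSort_perm hr).mem_iff]
    exact fun x hx => hx.elim (hln x) (hrn x)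

theorem SplitTree.mem_properCuts {T : SplitTree} {m : ℕ} :
    m ∈ T.properCuts ↔ m ∈ T.cuts ∧ m < T.size := by
  rw [cuts, Finset.mem_insert]
  constructor
  · exact fun h => ⟨.inr h, lt_size_of_mem_properCuts h⟩
  · rintro ⟨rfl | h, hlt⟩
    exacts [absurd hlt (lt_irrefl _), h]

theorem exists_isCode {σ : List ℕ} (hσ : σ.Nodup) (h : Avoids231 (stackSort σ)) :
    ∃ T : SplitTree, T.Valid ∧ T.IsCode σ ∧ ∀ m, m ∈ T.cuts ↔ IsCut (stackSort σ) m := by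
  induction σ, hσ using nodup_max_induction with
  | nil =>
    refine ⟨.nil, trivial, rfl, fun m => ?_⟩
    simp [SplitTree.cuts, SplitTree.size, SplitTree.properCuts, stackSort_nil, isCut_nil]
  | split l n r _ hl hr hlr hln hrn ihl ihr =>
    rw [stackSort_append_cons hln hrn] at h ⊢
    have perm_l := stackSort_perm hl
    have perm_r := stackSort_perm hr
    have avoids := h.sublist (List.sublist_append_left _ _)
    obtain ⟨L, hLv, hLc, hLcut⟩ := ihl (avoids.sublist (List.sublist_append_left _ _))
    obtain ⟨R, hRv, hRc, hRcut⟩ := ihr (avoids.sublist (List.sublist_append_right _ _))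
    obtain ⟨j, hj, hjcut, hbelow, hcut⟩ := avoids.exists_isCut_append
      ((perm_l.append perm_r).nodup_iff.2 (List.nodup_append'.2 ⟨hl, hr, hlr⟩))
      fun u a => lt_of_stackSort_eq_append_singleton hl
    rw [List.toFinset_eq_of_perm _ _ perm_l, List.toFinset_eq_of_perm _ _ perm_r] at hbelow
    have length_l : (stackSort l).length = L.size := perm_l.length_eq.trans hLc.length_eq
    have length_r : (stackSort r).length = R.size := perm_r.length_eq.trans hRc.length_eq
    have hjlabel : j ∈ SplitTree.labels L R := by
      rw [SplitTree.labels]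
      split_ifs with hL
      · exact Finset.mem_singleton.2 (hj ((stackSort_eq_nil hl).2 (hLc.eq_nil_iff.1 hL)))
      · exact (hRcut j).2 hjcut
    refine ⟨.node L R j, ⟨hLv, hRv, hjlabel⟩, ⟨l, n, r, rfl, hln, hrn, hbelow, hLc, hRc⟩,
      fun m => ?_⟩
    have lt_n : ∀ x ∈ stackSort l ++ stackSort r, x < n := by
      simp only [List.mem_append, perm_l.mem_iff, perm_r.mem_iff]
      exact fun x hx => hx.elim (hln x) (hrn x)
    rw [isCut_append_singleton lt_n, hcut, SplitTree.mem_cuts_node, List.length_append, length_l,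
      length_r]
    simp only [SplitTree.mem_properCuts, hLcut, hRcut]

theorem avoids231_of_pairwise_stackSort {w : List ℕ} (hw : w.Nodup)
    (hs : (stackSort w).Pairwise (· < ·)) : Avoids231 w := by
  induction w, hw using nodup_max_induction with
  | nil => exact fun b c a h => by simp at h
  | split l n r _ hl hr _ hln hrn ihl ihr =>
    rw [stackSort_append_cons hln hrn, List.pairwise_append, List.pairwise_append] at hs
    obtain ⟨⟨hsl, hsr, hlr⟩, -, -⟩ := hs
    simp only [(stackSort_perm hl).mem_iff, (stackSort_perm hr).mem_iff] at hlr
    intro b c a h hab hbc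
    obtain ⟨u, v, huv, hu, hv⟩ := List.sublist_append_iff.1 h
    obtain _ | ⟨b', u⟩ := u
    · rw [List.nil_append] at huv
      obtain hv | ⟨r', hr', hv⟩ := List.sublist_cons_iff.1 (huv ▸ hv)
      · exact ihr hsr b c a hv hab hbc
      · obtain ⟨rfl, rfl⟩ : b = n ∧ [c, a] = r' := by simpa using hr'
        exact hbc.asymm (hrn c (hv.subset List.mem_cons_self))
    · obtain rfl | ⟨v', y, rfl⟩ := v.eq_nil_or_concat'
      · exact ihl hsl b c a (by simpa [huv] using hu) hab hbc
      · rw [← List.append_assoc] at huv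
        obtain rfl : a = y := by
          simpa using (List.append_inj' (s₁ := [b, c]) (t₁ := [a]) huv rfl).2
        have hb : b ∈ l := hu.subset (by grind)
        have ha : a ∈ n :: r := hv.subset (by simp)
        have := hln b hb
        have := hlr b hb
        grind

section Growth

variable {x t S : ℝ} {g : ℕ → ℝ}

theorem sum_sortable_two_le {q : ℝ} (h : IsMajorant x (x * q) S g) (hx : 0 ≤ x) (hq : 0 ≤ q)
    (n : ℕ) : ∑ σ ∈ sortable 2 n, x ^ n * q ^ (ascTops σ).card ≤ S := by
  have exists_code (σ : List ℕ) (hσ : σ ∈ sortable 2 n) :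
      ∃ T : SplitTree, T.Valid ∧ T.IsCode σ := by
    have nodup := nodup_of_mem_sortable hσ
    have perm := stackSort_perm nodup
    have avoids : Avoids231 (stackSort σ) := by
      refine avoids231_of_pairwise_stackSort (perm.nodup_iff.2 nodup) ?_
      rw [show stackSort (stackSort σ) = List.range' 1 n from (mem_sortable.1 hσ).2]
      exact List.pairwise_lt_range'
    exact (exists_isCode nodup avoids).imp fun T hT => ⟨hT.1, hT.2.1⟩
  choose! code valid isCode using exists_code
  have injOn : Set.InjOn code (sortable 2 n) := fun σ hσ σ' hσ' hcode =>
    (isCode σ hσ).unique (hcode ▸ isCode σ' hσ')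
      ((mem_sortable.1 hσ).1.trans (mem_sortable.1 hσ').1.symm) (nodup_of_mem_sortable hσ)
  calc ∑ σ ∈ sortable 2 n, x ^ n * q ^ (ascTops σ).card
      = ∑ σ ∈ sortable 2 n, (code σ).weight x (x * q) := by
        refine Finset.sum_congr rfl fun σ hσ => ?_
        rw [(isCode σ hσ).weight_eq (nodup_of_mem_sortable hσ), length_of_mem_sortable hσ]
    _ = ∑ T ∈ (sortable 2 n).image code, T.weight x (x * q) := (Finset.sum_image injOn).symm
    _ ≤ ∑ T ∈ SplitTree.trees n, T.weight x (x * q) := by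
        refine Finset.sum_le_sum_of_subset_of_nonneg (Finset.image_subset_iff.2 fun σ hσ => ?_)
          fun T _ _ => T.weight_nonneg hx (mul_nonneg hx hq)
        refine SplitTree.mem_trees (valid σ hσ) ?_
        rw [← (isCode σ hσ).length_eq, length_of_mem_sortable hσ]
    _ ≤ S := h.sum_weight_trees_le hx (mul_nonneg hx hq) n

theorem W₃_mul_pow_le (h : IsMajorant x (x * (1 + t) ^ 2) S g) (hx : 0 ≤ x) (ht : 0 ≤ t)
    (n : ℕ) : W₃ n * (t ^ (n - 1) * x ^ n) ≤ S := by
  calc W₃ n * (t ^ (n - 1) * x ^ n)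
      ≤ (∑ σ ∈ sortable 2 n, (2 * (ascTops σ).card).choose (n - 1) : ℕ) *
          (t ^ (n - 1) * x ^ n) := by
        rw [W₃_eq_card_sortable]
        gcongr
        exact card_sortable_succ_le 2 n
    _ = ∑ σ ∈ sortable 2 n,
          x ^ n * ((2 * (ascTops σ).card).choose (n - 1) * t ^ (n - 1)) := by
        rw [Nat.cast_sum, Finset.sum_mul]
        exact Finset.sum_congr rfl fun σ _ => by ring
    _ ≤ ∑ σ ∈ sortable 2 n, x ^ n * ((1 + t) ^ 2) ^ (ascTops σ).card := by
        refine Finset.sum_le_sum fun σ _ => ?_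
        rw [← pow_mul]
        gcongr
        exact choose_mul_pow_le _ _ ht
    _ ≤ S := sum_sortable_two_le h hx (by positivity) n

theorem limsup_rpow_one_div_le {a : ℕ → ℝ} {C K : ℝ} (ha : ∀ n, 0 ≤ a n) (hK : 0 ≤ K)
    (h : ∀ᶠ n in atTop, a n ≤ C * K ^ n) :
    limsup (fun n : ℕ => a n ^ ((1 : ℝ) / n)) atTop ≤ K := by
  have hC : 0 < max C 1 := lt_max_of_lt_right one_pos
  have tendsto_K : Tendsto (fun n : ℕ => max C 1 ^ ((1 : ℝ) / n) * K) atTop (nhds K) := by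
    simpa using (tendsto_const_nhds.rpow tendsto_one_div_atTop_nhds_zero_nat
      (.inl hC.ne')).mul_const K
  rw [← tendsto_K.limsup_eq]
  refine limsup_le_limsup ?_ ?_ tendsto_K.isBoundedUnder_le
  · filter_upwards [h, eventually_ne_atTop 0] with n han hn
    calc a n ^ ((1 : ℝ) / n) ≤ (max C 1 * K ^ n) ^ ((1 : ℝ) / n) := by
          have := ha n
          gcongr
          exact han.trans (by gcongr; exact le_max_left C 1)
      _ = max C 1 ^ ((1 : ℝ) / n) * K := by
          rw [Real.mul_rpow hC.le (by positivity), one_div, Real.pow_rpow_inv_natCast hK hn]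
  · exact IsCoboundedUnder.of_frequently_ge
      (Frequently.of_forall fun n => Real.rpow_nonneg (ha n) _)

theorem limsup_W₃_rpow_le (h : IsMajorant x (x * (1 + t) ^ 2) S g) (hx : 0 < x) (ht : 0 < t) :
    limsup (fun n : ℕ => (W₃ n : ℝ) ^ ((1 : ℝ) / n)) atTop ≤ (t * x)⁻¹ := by
  refine limsup_rpow_one_div_le (C := t * S) (fun n => by positivity) (by positivity) ?_
  filter_upwards [eventually_ne_atTop 0] with n hn
  rw [inv_pow, ← div_eq_mul_inv, le_div_iff₀ (by positivity)]
  calc W₃ n * (t * x) ^ n = t * (W₃ n * (t ^ (n - 1) * x ^ n)) := by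
        rw [mul_pow, ← mul_pow_sub_one hn t]
        ring
    _ ≤ t * S := by gcongr; exact W₃_mul_pow_le h hx.le ht.le n

end Growth

/-- The exponential growth rate of 3-stack sortable permutations is at most
`12.533`: `limsup_{n→∞} W_3(n)^{1/n} ≤ 12.533`. -/
theorem stmt_15 :
    limsup (fun n : ℕ => (W₃ n : ℝ) ^ ((1 : ℝ) / n)) atTop ≤ 12.533 := by
  -- `(t * x)⁻¹` is to be minimized subject to `4 * (u * v) ≤ (1 - u) * (1 - v)`, where
  -- `x = u * (1 - v) ^ 2` and `x * (1 + t) ^ 2 = v * (1 - u) ^ 2`. The optimum lies on the boundary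
  -- and equals `12.53296…`; these values are close to it, and `v / u` is a square.
  let u : ℝ := 189 / 1121
  let v : ℝ := 228 / 413
  let t : ℝ := 1309 / 555
  have y_eq : v * (1 - u) ^ 2 = u * (1 - v) ^ 2 * (1 + t) ^ 2 := by norm_num [u, v, t]
  have majorant := isMajorant_levelWeight (u := u) (v := v) (by norm_num [u]) (by norm_num [u])
    (by norm_num [v]) (by norm_num [v]) (by norm_num [u, v])
  rw [y_eq] at majorant
  calc limsup (fun n : ℕ => (W₃ n : ℝ) ^ ((1 : ℝ) / n)) atTop ≤ (t * (u * (1 - v) ^ 2))⁻¹ :=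
        limsup_W₃_rpow_le majorant (by norm_num [u, v]) (by norm_num [t])
    _ ≤ 12.533 := by norm_num [u, v, t]
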